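/- There exists a constant s > 0 such that, for the planar rancher process (x_n), almost surely limsup_{n→∞} ‖x_n‖/n ≥ s. -/

import Mathlib

open MeasureTheory Filter Real

/-- The unit vector in the plane at angle `θ`. -/
noncomputable def unitDir (θ : ℝ) : EuclideanSpace ℝ (Fin 2) :=
  (WithLp.equiv 2 (Fin 2 → ℝ)).symm ![Real.cos θ, Real.sin θ]

/-- The set of angles `θ ∈ [0, 2π)` such that the unit step from `xₙ` in
direction `θ` does not intersect the interior of the convex hull of
`{x₀, …, xₙ}` (the ranch).  The points `y` at distance `1` from `xₙ` are
exactly the points `xₙ + unitDir θ`, `θ ∈ [0, 2π)`. -/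
noncomputable def rancherAngles {Ω : Type*} (x : ℕ → Ω → EuclideanSpace ℝ (Fin 2))
    (n : ℕ) (ω : Ω) : Set ℝ :=
  {θ : ℝ | θ ∈ Set.Ico 0 (2 * π) ∧
    segment ℝ (x n ω) (x n ω + unitDir θ) ∩
      interior (convexHull ℝ (Set.range fun i : Fin (n + 1) => x i ω)) = ∅}

/-- The normalized arc-length (uniform) measure on the set of allowed
positions for `x_{n+1}`:  the push-forward under `θ ↦ xₙ + unitDir θ` of the
normalized restriction of Lebesgue measure to the allowed angles. -/
noncomputable def rancherStep {Ω : Type*} (x : ℕ → Ω → EuclideanSpace ℝ (Fin 2))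
    (n : ℕ) (ω : Ω) : Measure (EuclideanSpace ℝ (Fin 2)) :=
  (volume (rancherAngles x n ω))⁻¹ •
    (volume.restrict (rancherAngles x n ω)).map fun θ => x n ω + unitDir θ

/-- An elementary inequality for a triangle of sides `l`, `m`, `D` whose apex angle is not small,
seen from a half-plane at the apex. -/
theorem exists_sign_half_le {l m D cw sw cz sz : ℝ} (hl : 0 < l) (hm : 0 < m) (hD : 0 < D)
    (hlD : l ≤ D + m / 2) (hmD : m ≤ D + l / 2) (hw : cw ^ 2 + sw ^ 2 = 1)
    (hz : cz ^ 2 + sz ^ 2 = 1) (hcw : 0 ≤ cw) (hcz : 0 ≤ cz)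
    (hwz : cw * cz + sw * sz ≤ 7 / 8)
    (hDsq : D ^ 2 = (l * cw - m * cz) ^ 2 + (l * sw - m * sz) ^ 2) :
    ∃ σ : ℝ, |σ| = 1 ∧ σ * (cw * sz - sw * cz) = |cw * sz - sw * cz| ∧
      1 / 2 ≤ 8 * (cw + cz) + σ * (m * sz - l * sw) / D := by
  have hl2 : l ≤ 2 * D := by linarith
  have hm2 : m ≤ 2 * D := by linarith
  have hle : |m * sz - l * sw| / D ≤ 1 := by
    rw [div_le_one hD]
    refine abs_le_of_sq_le_sq ?_ hD.le
    nlinarith [sq_nonneg (l * cw - m * cz)]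
  by_cases hc : 1 / 4 ≤ cw ∨ 1 / 4 ≤ cz
  · have key : ∀ σ : ℝ, |σ| = 1 → 1 / 2 ≤ 8 * (cw + cz) + σ * (m * sz - l * sw) / D := by
      intro σ hσ
      have h1 : |σ * (m * sz - l * sw) / D| ≤ 1 := by
        rw [abs_div, abs_mul, hσ, one_mul, abs_of_pos hD]; exact hle
      have := (abs_le.mp h1).1
      rcases hc with h | h <;> linarith
    rcases le_total 0 (cw * sz - sw * cz) with h | h
    · exact ⟨1, by simp, by rw [abs_of_nonneg h, one_mul], key 1 (by simp)⟩
    · exact ⟨-1, by simp, by rw [abs_of_nonpos h]; ring, key (-1) (by simp)⟩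
  · push Not at hc
    obtain ⟨h1, h2⟩ := hc
    have hsw : 15 / 16 ≤ sw ^ 2 := by nlinarith
    have hsz : 15 / 16 ≤ sz ^ 2 := by nlinarith
    have hx : |l * cw - m * cz| ≤ D / 2 := by
      rw [abs_le]; constructor <;> nlinarith
    have hx2 : (l * cw - m * cz) ^ 2 ≤ (D / 2) ^ 2 := sq_le_sq' (abs_le.mp hx).1 (abs_le.mp hx).2
    have hprod : sw * sz < 0 := by
      by_contra hcon
      push Not at hcon
      have : (15 / 16) ^ 2 ≤ (sw * sz) ^ 2 := by rw [mul_pow]; nlinarith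
      have : 15 / 16 ≤ sw * sz := le_of_sq_le_sq this hcon
      nlinarith [mul_nonneg hcw hcz]
    have hsq : (D / 2) ^ 2 ≤ (m * sz - l * sw) ^ 2 := by nlinarith
    rcases lt_or_ge 0 sz with hs | hs
    · have hsw' : sw < 0 := neg_of_mul_neg_left hprod hs.le
      have e1 := mul_nonneg hcw hs.le
      have e2 := mul_nonneg hcz (neg_nonneg.mpr hsw'.le)
      have e3 := mul_nonneg hm.le hs.le
      have e4 := mul_nonneg hl.le (neg_nonneg.mpr hsw'.le)
      refine ⟨1, by simp, ?_, ?_⟩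
      · rw [one_mul, abs_of_nonneg]; linarith
      · have h0 : 0 ≤ m * sz - l * sw := by linarith
        have : D / 2 ≤ m * sz - l * sw := abs_le_of_sq_le_sq' hsq h0 |>.2
        have : 1 / 2 ≤ (m * sz - l * sw) / D := by rw [le_div_iff₀ hD]; linarith
        rw [one_mul]; linarith
    · have hsw' : 0 < sw := pos_of_mul_neg_left hprod hs
      have e1 := mul_nonneg hcw (neg_nonneg.mpr hs)
      have e2 := mul_nonneg hcz hsw'.le
      have e3 := mul_nonneg hm.le (neg_nonneg.mpr hs)
      have e4 := mul_nonneg hl.le hsw'.le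
      refine ⟨-1, by simp, ?_, ?_⟩
      · rw [abs_of_nonpos] <;> linarith
      · have h0 : 0 ≤ -(m * sz - l * sw) := by linarith
        have : D / 2 ≤ -(m * sz - l * sw) := abs_le_of_sq_le_sq' (by rwa [neg_sq]) h0 |>.2
        have : 1 / 2 ≤ -1 * (m * sz - l * sw) / D := by rw [le_div_iff₀ hD]; linarith
        linarith

/-- The Euclidean plane. -/
abbrev Plane : Type := EuclideanSpace ℝ (Fin 2)

@[simp] theorem unitDir_zero (θ : ℝ) : unitDir θ 0 = cos θ := rfl

@[simp] theorem unitDir_one (θ : ℝ) : unitDir θ 1 = sin θ := rfl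

theorem plane_inner (v w : Plane) : inner ℝ v w = v 0 * w 0 + v 1 * w 1 := by
  simp [PiLp.inner_apply, Fin.sum_univ_two, mul_comm]

theorem plane_norm_sq (v : Plane) : ‖v‖ ^ 2 = v 0 ^ 2 + v 1 ^ 2 := by
  simp [EuclideanSpace.real_norm_sq_eq, Fin.sum_univ_two]

@[simp] theorem norm_unitDir (θ : ℝ) : ‖unitDir θ‖ = 1 := by
  have h := plane_norm_sq (unitDir θ)
  rw [unitDir_zero, unitDir_one, cos_sq_add_sin_sq] at h
  nlinarith [norm_nonneg (unitDir θ)]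

theorem continuous_unitDir : Continuous unitDir := by
  refine (PiLp.continuous_toLp 2 _).comp (continuous_pi fun i => ?_)
  fin_cases i
  · exact continuous_cos
  · exact continuous_sin

theorem sin_smul_unitDir (a b c : ℝ) :
    sin (b - a) • unitDir c = sin (b - c) • unitDir a + sin (c - a) • unitDir b := by
  ext i
  fin_cases i
  · simp [sin_sub]; ring
  · simp [sin_sub]; ring

theorem exists_polar (φ₀ : ℝ) (v : Plane) :
    ∃ φ ∈ Set.Ioc (φ₀ - π) (φ₀ + π), v = ‖v‖ • unitDir φ := by
  set z : ℂ := ⟨v 0, v 1⟩ with hz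
  have hn : ‖z‖ = ‖v‖ := by
    rw [← sq_eq_sq₀ (norm_nonneg _) (norm_nonneg _), plane_norm_sq, Complex.sq_norm,
      Complex.normSq_apply]
    ring
  refine ⟨toIocMod two_pi_pos (φ₀ - π) z.arg, ?_, ?_⟩
  · have h := toIocMod_mem_Ioc two_pi_pos (φ₀ - π) z.arg
    rwa [show φ₀ - π + 2 * π = φ₀ + π by ring] at h
  · have hc : cos (toIocMod two_pi_pos (φ₀ - π) z.arg) = cos z.arg := by
      rw [toIocMod, zsmul_eq_mul, cos_sub_int_mul_two_pi]
    have hs : sin (toIocMod two_pi_pos (φ₀ - π) z.arg) = sin z.arg := by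
      rw [toIocMod, zsmul_eq_mul, sin_sub_int_mul_two_pi]
    ext i
    fin_cases i
    · change v 0 = ‖v‖ * cos _
      rw [hc, ← hn, Complex.norm_mul_cos_arg]
    · change v 1 = ‖v‖ * sin _
      rw [hs, ← hn, Complex.norm_mul_sin_arg]

/-- The directions pointing from `x` into the interior of `K`. -/
def innerCone (K : Set Plane) (x : Plane) : Set Plane :=
  {v | ∃ s : ℝ, 0 < s ∧ x + s • v ∈ interior K}

theorem isOpen_innerCone (K : Set Plane) (x : Plane) : IsOpen (innerCone K x) := by
  have : innerCone K x = ⋃ s ∈ Set.Ioi (0 : ℝ), (fun v => x + s • v) ⁻¹' interior K := by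
    ext v; simp [innerCone]
  rw [this]
  exact isOpen_biUnion fun s _ => isOpen_interior.preimage (by fun_prop)

theorem combo_mem_innerCone {K : Set Plane} (hK : Convex ℝ K) {x v w : Plane}
    (hv : v ∈ innerCone K x) {s : ℝ} (hs : 0 < s) (hw : x + s • w ∈ K) {α β : ℝ}
    (hα : 0 < α) (hβ : 0 ≤ β) : α • v + β • w ∈ innerCone K x := by
  obtain ⟨r, hr, hrv⟩ := hv
  have hk : 0 < α / r + β / s := by positivity
  refine ⟨(α / r + β / s)⁻¹, by positivity, ?_⟩
  have h := hK.combo_interior_self_mem_interior hrv hw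
    (a := (α / r) / (α / r + β / s)) (b := (β / s) / (α / r + β / s)) (by positivity)
    (by positivity) (by rw [← add_div, div_self hk.ne'])
  convert h using 1
  have h1 : x = ((α / r) / (α / r + β / s) + (β / s) / (α / r + β / s)) • x := by
    rw [← add_div, div_self hk.ne', one_smul]
  have h2 : (α / r) / (α / r + β / s) * r = (α / r + β / s)⁻¹ * α := by field_simp
  have h3 : (β / s) / (α / r + β / s) * s = (α / r + β / s)⁻¹ * β := by field_simp
  rw [smul_add, smul_add, smul_add, smul_smul, smul_smul, smul_smul, smul_smul, h2, h3]
  nth_rewrite 1 [h1]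
  rw [add_smul]
  abel

theorem smul_mem_innerCone {K : Set Plane} {x v : Plane} (hv : v ∈ innerCone K x) {α : ℝ}
    (hα : 0 < α) : α • v ∈ innerCone K x := by
  obtain ⟨s, hs, h⟩ := hv
  refine ⟨s / α, by positivity, ?_⟩
  rwa [smul_smul, div_mul_cancel₀ _ hα.ne']

theorem segment_inter_interior_eq_empty_iff {K : Set Plane} (hK : Convex ℝ K) {x : Plane}
    (hx : x ∈ K) (hx' : x ∉ interior K) (u : Plane) :
    segment ℝ x (x + u) ∩ interior K = ∅ ↔ u ∉ innerCone K x := by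
  rw [← Set.not_nonempty_iff_eq_empty, not_iff_not, segment_eq_image']
  constructor
  · rintro ⟨_, ⟨s, ⟨hs0, hs1⟩, rfl⟩, h⟩
    simp only [add_sub_cancel_left] at h
    refine ⟨s, lt_of_le_of_ne hs0 ?_, h⟩
    rintro rfl
    simp [hx'] at h
  · rintro ⟨s, hs, h⟩
    refine ⟨x + (min s 1) • u, ⟨min s 1, ⟨by positivity, min_le_right _ _⟩, by simp⟩, ?_⟩
    have hq : min s 1 / s ≤ 1 := (div_le_one hs).2 (min_le_left _ _)
    have := hK.combo_interior_self_mem_interior h hx (a := min s 1 / s) (b := 1 - min s 1 / s)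
      (by positivity) (by linarith) (by ring)
    convert this using 1
    rw [smul_add, smul_smul, div_mul_cancel₀ _ hs.ne', sub_smul, one_smul]
    abel

theorem cos_nonneg_of_mem {t : ℝ} (h : -π ≤ t ∧ t ≤ π) (hc : 0 ≤ cos t) :
    -(π / 2) ≤ t ∧ t ≤ π / 2 := by
  constructor
  · by_contra! hlt
    have := cos_neg_of_pi_div_two_lt_of_lt (x := -t) (by linarith) (by linarith [pi_pos])
    rw [cos_neg] at this
    linarith
  · by_contra! hlt
    have := cos_neg_of_pi_div_two_lt_of_lt (x := t) (by linarith) (by linarith [pi_pos])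
    linarith

theorem exists_arc {K : Set Plane} (hK : Convex ℝ K) {x : Plane} (hx : x ∈ K)
    (hx' : x ∉ interior K) (hne : (interior K).Nonempty) :
    ∃ φ₁ φ₂ : ℝ, φ₁ ≤ φ₂ ∧ φ₂ ≤ φ₁ + π ∧
      (∀ a ∈ K, a ≠ x → ∃ φ ∈ Set.Icc φ₁ φ₂, a - x = ‖a - x‖ • unitDir φ) ∧
      ∀ G : ℝ → ℝ, Continuous G → Function.Periodic G (2 * π) →
        ∫ θ in {θ : ℝ | θ ∈ Set.Ico 0 (2 * π) ∧
          segment ℝ x (x + unitDir θ) ∩ interior K = ∅}, G θ =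
        (∫ θ in (0 : ℝ)..2 * π, G θ) - ∫ θ in φ₁..φ₂, G θ := by
  obtain ⟨f, hf⟩ := geometric_hahn_banach_open_point hK.interior isOpen_interior hx'
  have hfC : ∀ v ∈ innerCone K x, f v < 0 := by
    rintro v ⟨s, hs, h⟩
    have := hf _ h
    rw [map_add, map_smul, smul_eq_mul] at this
    by_contra! hv
    nlinarith [mul_nonneg hs.le hv]
  obtain ⟨k, hk⟩ := hne
  have hkC : k - x ∈ innerCone K x := ⟨1, one_pos, by simpa using hk⟩
  have hfK : ∀ a ∈ K, f (a - x) ≤ 0 := by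
    intro a ha
    by_contra! hpos
    have h1 := hfC _ (combo_mem_innerCone hK hkC one_pos (w := a - x) (by simpa using ha)
      hpos (neg_nonneg.mpr (hfC _ hkC).le))
    rw [map_add, map_smul, map_smul, smul_eq_mul, smul_eq_mul] at h1
    nlinarith
  obtain ⟨φ₀, c, hc, hfu⟩ : ∃ φ₀ c : ℝ, 0 < c ∧ ∀ θ, f (unitDir θ) = -(c * cos (θ - φ₀)) := by
    set N : Plane := (InnerProductSpace.toDual ℝ Plane).symm f with hN
    have hfN : ∀ v, f v = inner ℝ N v := fun v => by
      rw [hN, InnerProductSpace.toDual_symm_apply]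
    obtain ⟨φ, -, hφ⟩ := exists_polar 0 (-N)
    refine ⟨φ, ‖-N‖, ?_, fun θ => ?_⟩
    · rw [norm_neg, norm_pos_iff]
      intro h0
      have := hfC _ hkC
      rw [hfN, h0, inner_zero_left] at this
      exact lt_irrefl _ this
    · have h0 : -N 0 = ‖-N‖ * cos φ := congrArg (fun v : Plane => v 0) hφ
      have h1 : -N 1 = ‖-N‖ * sin φ := congrArg (fun v : Plane => v 1) hφ
      rw [hfN, plane_inner, unitDir_zero, unitDir_one, cos_sub]
      linear_combination -cos θ * h0 - sin θ * h1
  set J : Set ℝ := {θ | θ ∈ Set.Ioc (φ₀ - π) (φ₀ + π) ∧ unitDir θ ∈ innerCone K x} with hJ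
  have hJsub : ∀ θ ∈ J, φ₀ - π / 2 < θ ∧ θ < φ₀ + π / 2 := by
    rintro θ ⟨⟨h1, h2⟩, h3⟩
    have h4 := hfC _ h3
    rw [hfu] at h4
    have h5 : 0 < cos (θ - φ₀) := by
      by_contra! h
      nlinarith
    obtain ⟨h6, h7⟩ := cos_nonneg_of_mem (t := θ - φ₀) ⟨by linarith, by linarith⟩ h5.le
    constructor
    · refine lt_of_le_of_ne (by linarith) fun h => ?_
      rw [← h, show φ₀ - π / 2 - φ₀ = -(π / 2) by ring, cos_neg, cos_pi_div_two] at h5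
      exact lt_irrefl _ h5
    · refine lt_of_le_of_ne (by linarith) fun h => ?_
      rw [h, show φ₀ + π / 2 - φ₀ = π / 2 by ring, cos_pi_div_two] at h5
      exact lt_irrefl _ h5
  have hJne : J.Nonempty := by
    obtain ⟨φ, hφ, h⟩ := exists_polar φ₀ (k - x)
    have hpos : 0 < ‖k - x‖ := by
      rw [norm_pos_iff]
      intro h0
      have := hfC _ hkC
      rw [h0, map_zero] at this
      exact lt_irrefl _ this
    refine ⟨φ, hφ, ?_⟩
    have := smul_mem_innerCone hkC (inv_pos.mpr hpos)
    rwa [h, norm_smul, norm_norm, norm_unitDir, mul_one, smul_smul, inv_mul_cancel₀ hpos.ne',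
      one_smul] at this
  have hbdd : BddBelow J := ⟨φ₀ - π / 2, fun θ hθ => (hJsub θ hθ).1.le⟩
  have hbdd' : BddAbove J := ⟨φ₀ + π / 2, fun θ hθ => (hJsub θ hθ).2.le⟩
  have hJpi : ∀ θ, φ₀ - π / 2 ≤ θ → θ ≤ φ₀ + π / 2 → unitDir θ ∈ innerCone K x → θ ∈ J :=
    fun θ h1 h2 h => ⟨⟨by linarith [pi_pos], by linarith [pi_pos]⟩, h⟩
  -- an angle strictly between a direction of `J` and one of `K` lies in `J`
  have hbetween : ∀ θ ∈ J, ∀ φ, φ₀ - π / 2 ≤ φ → φ ≤ φ₀ + π / 2 →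
      (∃ s : ℝ, 0 < s ∧ x + s • unitDir φ ∈ K) → ∀ τ, (φ < τ ∧ τ < θ ∨ θ < τ ∧ τ < φ) → τ ∈ J := by
    rintro θ hθ φ h1 h2 ⟨s, hs, hφ⟩ τ hτ
    obtain ⟨h3, h4⟩ := hJsub θ hθ
    rcases hτ with ⟨h5, h6⟩ | ⟨h5, h6⟩
    · refine hJpi τ (by linarith) (by linarith) ?_
      have p1 : 0 < sin (θ - φ) := sin_pos_of_pos_of_lt_pi (by linarith) (by linarith)
      have p2 : 0 < sin (θ - τ) := sin_pos_of_pos_of_lt_pi (by linarith) (by linarith)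
      have p3 : 0 < sin (τ - φ) := sin_pos_of_pos_of_lt_pi (by linarith) (by linarith)
      have := smul_mem_innerCone (combo_mem_innerCone hK hθ.2 hs hφ p3 p2.le) (inv_pos.mpr p1)
      rwa [add_comm, ← sin_smul_unitDir, smul_smul, inv_mul_cancel₀ p1.ne', one_smul] at this
    · refine hJpi τ (by linarith) (by linarith) ?_
      have p1 : 0 < sin (φ - θ) := sin_pos_of_pos_of_lt_pi (by linarith) (by linarith)
      have p2 : 0 < sin (φ - τ) := sin_pos_of_pos_of_lt_pi (by linarith) (by linarith)
      have p3 : 0 < sin (τ - θ) := sin_pos_of_pos_of_lt_pi (by linarith) (by linarith)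
      have := smul_mem_innerCone (combo_mem_innerCone hK hθ.2 hs hφ p2 p3.le) (inv_pos.mpr p1)
      rwa [← sin_smul_unitDir, smul_smul, inv_mul_cancel₀ p1.ne', one_smul] at this
  have hJIoo : Set.Ioo (sInf J) (sSup J) ⊆ J := by
    rintro τ ⟨h1, h2⟩
    obtain ⟨θ₁, hθ₁, h3⟩ := exists_lt_of_csInf_lt hJne h1
    obtain ⟨θ₂, hθ₂, h4⟩ := exists_lt_of_lt_csSup hJne h2
    obtain ⟨s, hs, h5⟩ := hθ₁.2
    exact hbetween θ₂ hθ₂ θ₁ (hJsub _ hθ₁).1.le (hJsub _ hθ₁).2.le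
      ⟨s, hs, interior_subset h5⟩ τ (Or.inl ⟨h3, h4⟩)
  have hJIcc : J ⊆ Set.Icc (sInf J) (sSup J) := fun θ hθ => ⟨csInf_le hbdd hθ, le_csSup hbdd' hθ⟩
  have hle : sInf J ≤ sSup J := by
    obtain ⟨θ, hθ⟩ := hJne
    exact (csInf_le hbdd hθ).trans (le_csSup hbdd' hθ)
  have hinf : φ₀ - π / 2 ≤ sInf J := le_csInf hJne fun θ hθ => (hJsub θ hθ).1.le
  have hsup : sSup J ≤ φ₀ + π / 2 := csSup_le hJne fun θ hθ => (hJsub θ hθ).2.le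
  refine ⟨sInf J, sSup J, hle, by linarith, ?_, ?_⟩
  · intro a ha hax
    obtain ⟨φ, hφ, h⟩ := exists_polar φ₀ (a - x)
    have hpos : 0 < ‖a - x‖ := norm_pos_iff.mpr (sub_ne_zero.mpr hax)
    have h1 := hfK a ha
    rw [h, map_smul, hfu, smul_eq_mul] at h1
    have h2 : 0 ≤ cos (φ - φ₀) := by
      by_contra! h
      nlinarith [mul_pos hpos hc]
    obtain ⟨h3, h4⟩ := cos_nonneg_of_mem (t := φ - φ₀)
      ⟨by linarith [hφ.1], by linarith [hφ.2]⟩ h2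
    have hφK : ∃ s : ℝ, 0 < s ∧ x + s • unitDir φ ∈ K := ⟨‖a - x‖, hpos, by rw [← h]; simpa⟩
    obtain ⟨θ, hθ⟩ := hJne
    refine ⟨φ, ⟨?_, ?_⟩, h⟩
    · by_contra! hlt
      obtain ⟨τ, h5, h6⟩ := exists_between hlt
      have := hbetween θ hθ φ (by linarith) (by linarith) hφK τ
        (Or.inl ⟨h5, h6.trans_le (csInf_le hbdd hθ)⟩)
      exact absurd (csInf_le hbdd this) (not_le.mpr h6)
    · by_contra! hlt
      obtain ⟨τ, h5, h6⟩ := exists_between hlt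
      have := hbetween θ hθ φ (by linarith) (by linarith) hφK τ
        (Or.inr ⟨(le_csSup hbdd' hθ).trans_lt h5, h6⟩)
      exact absurd (le_csSup hbdd' this) (not_le.mpr h5)
  · intro G hG hper
    set B : Set ℝ := {θ | unitDir θ ∈ innerCone K x} with hB
    have hBm : MeasurableSet B :=
      ((isOpen_innerCone K x).preimage continuous_unitDir).measurableSet
    have hS : {θ : ℝ | θ ∈ Set.Ico 0 (2 * π) ∧
        segment ℝ x (x + unitDir θ) ∩ interior K = ∅} = Set.Ico 0 (2 * π) \ B := by
      ext θ
      simp only [Set.mem_ofPred_eq, segment_inter_interior_eq_empty_iff hK hx hx', Set.mem_sdiff, hB]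
    have hint : IntegrableOn G (Set.Ico 0 (2 * π)) :=
      (hG.integrableOn_Icc).mono_set Set.Ico_subset_Icc_self
    have hsplit := setIntegral_sdiff₀ (μ := volume) (f := G) (s := Set.Ico 0 (2 * π))
      (t := Set.Ico 0 (2 * π) ∩ B) ((measurableSet_Ico.inter hBm).nullMeasurableSet) hint
      Set.inter_subset_left
    rw [Set.sdiff_self_inter] at hsplit
    rw [hS, hsplit]
    have e1 : ∫ θ in Set.Ico 0 (2 * π), G θ = ∫ θ in (0 : ℝ)..2 * π, G θ := by
      rw [intervalIntegral.integral_of_le two_pi_pos.le, integral_Ico_eq_integral_Ioc]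
    have e2 : ∫ θ in Set.Ico 0 (2 * π) ∩ B, G θ = ∫ θ in J, G θ := by
      have p : Function.Periodic (B.indicator G) (2 * π) := by
        intro θ
        have : unitDir (θ + 2 * π) = unitDir θ := by simp [unitDir]
        have hiff : θ + 2 * π ∈ B ↔ θ ∈ B := by
          change unitDir (θ + 2 * π) ∈ innerCone K x ↔ unitDir θ ∈ innerCone K x
          rw [this]
        by_cases h : θ ∈ B
        · rw [Set.indicator_of_mem h, Set.indicator_of_mem (hiff.2 h), hper]
        · rw [Set.indicator_of_notMem h, Set.indicator_of_notMem (mt hiff.1 h)]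
      have hJB : J = Set.Ioc (φ₀ - π) (φ₀ + π) ∩ B := rfl
      rw [hJB, ← setIntegral_indicator hBm, ← setIntegral_indicator hBm,
        integral_Ico_eq_integral_Ioc, ← intervalIntegral.integral_of_le two_pi_pos.le,
        ← intervalIntegral.integral_of_le (by linarith [pi_pos])]
      have := p.intervalIntegral_add_eq 0 (φ₀ - π)
      rwa [zero_add, show φ₀ - π + 2 * π = φ₀ + π by ring] at this
    have e3 : ∫ θ in J, G θ = ∫ θ in (sInf J)..(sSup J), G θ := by
      rw [intervalIntegral.integral_of_le hle]
      have a1 : (Set.Ioo (sInf J) (sSup J) : Set ℝ) =ᵐ[volume] Set.Icc (sInf J) (sSup J) :=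
        Ioo_ae_eq_Icc
      have a2 : (Set.Ioc (sInf J) (sSup J) : Set ℝ) =ᵐ[volume] Set.Icc (sInf J) (sSup J) :=
        Ioc_ae_eq_Icc
      refine setIntegral_congr_set (EventuallyLE.antisymm ?_ ?_)
      · exact (LE.le.eventuallyLE hJIcc).trans a2.symm.le
      · exact (a2.trans a1.symm).le.trans (LE.le.eventuallyLE hJIoo)
    rw [e1, e2, e3]

/-- The planar cross product. -/
def cross (v w : Plane) : ℝ := v 0 * w 1 - v 1 * w 0

/-- A potential attached to a chord `[a, p]` and a position `y`. -/
noncomputable def potential (a p y : Plane) : ℝ :=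
  18 * ‖a - p‖ + 8 * (‖y - a‖ + ‖y - p‖) + |cross (y - a) (y - p)| / ‖a - p‖

/-- The angles of the unit steps from `x` avoiding the interior of `K`. -/
def allowedAngles (K : Set Plane) (x : Plane) : Set ℝ :=
  {θ : ℝ | θ ∈ Set.Ico 0 (2 * π) ∧ segment ℝ x (x + unitDir θ) ∩ interior K = ∅}

theorem continuous_cross : Continuous fun q : Plane × Plane => cross q.1 q.2 := by
  unfold cross
  fun_prop

theorem cross_add_sub (x u a p : Plane) :
    cross (x + u - a) (x + u - p) = cross (x - a) (x - p) + cross u (a - p) := by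
  simp only [cross, PiLp.sub_apply, PiLp.add_apply]
  ring

theorem cross_sub_eq (y a p : Plane) : cross (y - a) (y - p) = cross (y - a) (a - p) := by
  simp only [cross, PiLp.sub_apply]
  ring

theorem abs_cross_le (v w : Plane) : |cross v w| ≤ ‖v‖ * ‖w‖ := by
  refine abs_le_of_sq_le_sq ?_ (by positivity)
  rw [mul_pow, plane_norm_sq, plane_norm_sq, cross]
  nlinarith [sq_nonneg (v 0 * w 0 + v 1 * w 1)]

theorem continuous_potential (a p : Plane) : Continuous (potential a p) := by
  have := continuous_cross.comp (f := fun y : Plane => (y - a, y - p)) (by fun_prop)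
  simp only [Function.comp_def] at this
  unfold potential
  fun_prop

theorem norm_add_inner_div_le (v u : Plane) : ‖v‖ + inner ℝ u v / ‖v‖ ≤ ‖v + u‖ := by
  rcases eq_or_ne v 0 with rfl | hv
  · simp
  · have hpos : 0 < ‖v‖ := norm_pos_iff.mpr hv
    have h1 := real_inner_le_norm v (v + u)
    rw [inner_add_right, real_inner_self_eq_norm_sq, real_inner_comm] at h1
    have h2 : inner ℝ u v / ‖v‖ * ‖v‖ = inner ℝ u v := div_mul_cancel₀ _ hpos.ne'
    nlinarith

theorem potential_sub_le (a p x u : Plane) (hu : ‖u‖ = 1) :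
    |potential a p (x + u) - potential a p x| ≤ 17 := by
  have h1 := abs_norm_sub_norm_le (x + u - a) (x - a)
  have h2 := abs_norm_sub_norm_le (x + u - p) (x - p)
  rw [show x + u - a - (x - a) = u by abel, hu] at h1
  rw [show x + u - p - (x - p) = u by abel, hu] at h2
  have h3 : |(|cross (x + u - a) (x + u - p)| / ‖a - p‖ - |cross (x - a) (x - p)| / ‖a - p‖)| ≤ 1 := by
    rw [← sub_div, abs_div, abs_norm]
    refine div_le_one_of_le₀ ?_ (norm_nonneg _)
    refine (abs_abs_sub_abs_le_abs_sub _ _).trans ?_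
    rw [cross_add_sub, add_sub_cancel_left]
    simpa [hu] using abs_cross_le u (a - p)
  rw [abs_le] at h1 h2 h3 ⊢
  simp only [potential]
  constructor <;> linarith [h1.1, h1.2, h2.1, h2.2, h3.1, h3.2]

theorem le_potential_add (a p x u : Plane) {σ : ℝ} (hσ : |σ| = 1)
    (h : σ * cross (x - a) (x - p) = |cross (x - a) (x - p)|) :
    potential a p x + 8 * (inner ℝ u (x - a) / ‖x - a‖ + inner ℝ u (x - p) / ‖x - p‖) +
      σ * cross u (a - p) / ‖a - p‖ ≤ potential a p (x + u) := by
  have h1 := norm_add_inner_div_le (x - a) u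
  have h2 := norm_add_inner_div_le (x - p) u
  rw [show x - a + u = x + u - a by abel] at h1
  rw [show x - p + u = x + u - p by abel] at h2
  have h3 : |cross (x - a) (x - p)| / ‖a - p‖ + σ * cross u (a - p) / ‖a - p‖ ≤
      |cross (x + u - a) (x + u - p)| / ‖a - p‖ := by
    rw [← add_div, ← h, ← mul_add, ← cross_add_sub]
    gcongr
    refine (le_abs_self _).trans ?_
    rw [abs_mul, hσ, one_mul]
  simp only [potential]
  linarith

theorem integral_trig (A B C s t : ℝ) :
    ∫ θ in s..t, (A * cos θ + B * sin θ + C) =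
      A * (sin t - sin s) - B * (cos t - cos s) + C * (t - s) := by
  rw [intervalIntegral.integral_eq_sub_of_hasDerivAt
    (f := fun θ => A * sin θ - B * cos θ + C * θ)]
  · ring
  · intro θ _
    have := (((hasDerivAt_sin θ).const_mul A).sub ((hasDerivAt_cos θ).const_mul B)).add
      ((hasDerivAt_id θ).const_mul C)
    convert this using 1
    · rfl
    · ring
  · exact Continuous.intervalIntegrable (by fun_prop) _ _

theorem cross_eq_zero_of_interior_eq_empty {K : Set Plane} (hK : Convex ℝ K)
    (hint : interior K = ∅) {x a p : Plane} (hx : x ∈ K) (ha : a ∈ K) (hp : p ∈ K) :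
    cross (x - a) (x - p) = 0 := by
  have h1 : affineSpan ℝ K ≠ ⊤ := by
    rw [Ne, ← hK.interior_nonempty_iff_affineSpan_eq_top, hint]
    exact Set.not_nonempty_empty
  have h2 : vectorSpan ℝ K ≠ ⊤ := by
    rw [← direction_affineSpan, Ne, AffineSubspace.direction_eq_top_iff_of_nonempty]
    · exact h1
    · exact ⟨x, subset_affineSpan ℝ K hx⟩
  have h3 : (vectorSpan ℝ K)ᗮ ≠ ⊥ := by
    rwa [Ne, Submodule.orthogonal_eq_bot_iff]
  obtain ⟨q, hq, hq0⟩ := Submodule.exists_mem_ne_zero_of_ne_bot h3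
  rw [Submodule.mem_orthogonal] at hq
  have e1 := hq _ (vsub_mem_vectorSpan ℝ hx ha)
  have e2 := hq _ (vsub_mem_vectorSpan ℝ hx hp)
  rw [vsub_eq_sub, plane_inner] at e1 e2
  have hn : 0 < ‖q‖ ^ 2 := by positivity
  rw [plane_norm_sq] at hn
  have f1 : cross (x - a) (x - p) * q 0 = 0 := by
    rw [cross]; linear_combination (x - p) 1 * e1 - (x - a) 1 * e2
  have f2 : cross (x - a) (x - p) * q 1 = 0 := by
    rw [cross]; linear_combination -(x - p) 0 * e1 + (x - a) 0 * e2
  by_contra hc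
  have g1 := (mul_eq_zero.mp f1).resolve_left hc
  have g2 := (mul_eq_zero.mp f2).resolve_left hc
  rw [g1, g2] at hn
  simp at hn

theorem integrableOn_allowedAngles (K : Set Plane) (x : Plane) {G : ℝ → ℝ} (hG : Continuous G) :
    IntegrableOn G (allowedAngles K x) :=
  (hG.integrableOn_Icc (a := 0) (b := 2 * π)).mono_set
    fun _ h => Set.Ico_subset_Icc_self h.1

theorem drift_of_interior_eq_empty {K : Set Plane} (hK : Convex ℝ K) (hint : interior K = ∅)
    {x a p : Plane} (hx : x ∈ K) (ha : a ∈ K) (hp : p ∈ K) (hap : a ≠ p) :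
    1 / 4 ≤ ∫ θ in allowedAngles K x, (potential a p (x + unitDir θ) - potential a p x) := by
  have hD : 0 < ‖a - p‖ := norm_pos_iff.mpr (sub_ne_zero.mpr hap)
  have hS : allowedAngles K x = Set.Ico 0 (2 * π) := by
    ext θ; simp [allowedAngles, hint]
  have h0 := cross_eq_zero_of_interior_eq_empty hK hint hx ha hp
  set d := a - p with hd
  set A := 8 * ((x - a) 0 / ‖x - a‖ + (x - p) 0 / ‖x - p‖)
  set B := 8 * ((x - a) 1 / ‖x - a‖ + (x - p) 1 / ‖x - p‖)
  have hpt : ∀ θ, A * cos θ + B * sin θ + (cross (unitDir θ) d / ‖d‖) ^ 2 ≤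
      potential a p (x + unitDir θ) - potential a p x := by
    intro θ
    obtain ⟨σ, hσ, hσ'⟩ : ∃ σ : ℝ, |σ| = 1 ∧
        σ * cross (unitDir θ) d = |cross (unitDir θ) d| := by
      rcases le_total 0 (cross (unitDir θ) d) with h | h
      · exact ⟨1, by simp, by rw [abs_of_nonneg h, one_mul]⟩
      · exact ⟨-1, by simp, by rw [abs_of_nonpos h]; ring⟩
    have h1 := le_potential_add a p x (unitDir θ) hσ (by rw [h0]; simp)
    rw [hσ', plane_inner, plane_inner, unitDir_zero, unitDir_one] at h1
    have h2 : |cross (unitDir θ) d| / ‖d‖ ≤ 1 := by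
      rw [div_le_one hD]
      simpa using abs_cross_le (unitDir θ) d
    have h3 : (cross (unitDir θ) d / ‖d‖) ^ 2 ≤ |cross (unitDir θ) d| / ‖d‖ := by
      rw [← sq_abs, abs_div, abs_norm]
      have : 0 ≤ |cross (unitDir θ) d| / ‖d‖ := by positivity
      nlinarith
    have h4 : A * cos θ + B * sin θ =
        8 * ((cos θ * (x - a) 0 + sin θ * (x - a) 1) / ‖x - a‖ +
          (cos θ * (x - p) 0 + sin θ * (x - p) 1) / ‖x - p‖) := by
      simp only [A, B]; ring
    linarith
  have hcont : Continuous fun θ => cross (unitDir θ) d := by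
    have := continuous_cross.comp (continuous_unitDir.prodMk (continuous_const (y := d)))
    exact this
  have hpc := (continuous_potential a p).comp (continuous_const.add continuous_unitDir :
    Continuous fun θ => x + unitDir θ)
  have hmono := setIntegral_mono (integrableOn_allowedAngles K x (G := fun θ =>
      A * cos θ + B * sin θ + (cross (unitDir θ) d / ‖d‖) ^ 2) (by fun_prop))
    (integrableOn_allowedAngles K x (G := fun θ =>
      potential a p (x + unitDir θ) - potential a p x) (hpc.sub continuous_const)) hpt
  refine le_trans ?_ hmono
  rw [hS, integral_Ico_eq_integral_Ioc, ← intervalIntegral.integral_of_le two_pi_pos.le]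
  have hval : ∫ θ in (0 : ℝ)..2 * π, (A * cos θ + B * sin θ + (cross (unitDir θ) d / ‖d‖) ^ 2) =
      π := by
    have hd2 := plane_norm_sq d
    have e : ∀ θ : ℝ, A * cos θ + B * sin θ + (cross (unitDir θ) d / ‖d‖) ^ 2 =
        (A * cos θ + B * sin θ + 0) + ((d 1 ^ 2 / ‖d‖ ^ 2) * cos θ ^ 2 +
          ((d 0 ^ 2 / ‖d‖ ^ 2) * sin θ ^ 2 - (2 * d 0 * d 1 / ‖d‖ ^ 2) * (sin θ * cos θ))) := by
      intro θ
      simp only [cross, unitDir_zero, unitDir_one]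
      ring
    simp only [e]
    rw [intervalIntegral.integral_add, integral_trig, intervalIntegral.integral_add,
      intervalIntegral.integral_sub, intervalIntegral.integral_const_mul,
      intervalIntegral.integral_const_mul, intervalIntegral.integral_const_mul,
      integral_cos_sq, integral_sin_sq, integral_sin_mul_cos₁]
    · simp only [sin_two_pi, cos_two_pi, sin_zero, cos_zero]
      field_simp
      rw [hd2]
      ring
    all_goals exact Continuous.intervalIntegrable (by fun_prop) _ _
  rw [hval]
  linarith [pi_gt_three]

theorem drift_of_eq_left {K : Set Plane} (hK : Convex ℝ K) (hne : (interior K).Nonempty)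
    {x p : Plane} (hx' : x ∉ interior K) (hx : x ∈ K) (hp : p ∈ K) (hap : x ≠ p) :
    1 / 4 ≤ ∫ θ in allowedAngles K x, (potential x p (x + unitDir θ) - potential x p x) := by
  obtain ⟨φ₁, φ₂, h12, h21, harc, hG⟩ := exists_arc hK hx hx' hne
  obtain ⟨φ, hφ, hpφ⟩ := harc p hp hap.symm
  have hl : 0 < ‖p - x‖ := norm_pos_iff.mpr (sub_ne_zero.mpr hap.symm)
  have hpt : ∀ θ, (-8 * cos φ) * cos θ + (-8 * sin φ) * sin θ + 8 ≤
      potential x p (x + unitDir θ) - potential x p x := by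
    intro θ
    have h1 := norm_add_inner_div_le (x - p) (unitDir θ)
    have h2 : inner ℝ (unitDir θ) (x - p) / ‖x - p‖ = -(cos φ * cos θ + sin φ * sin θ) := by
      rw [← neg_sub p x, inner_neg_right, norm_neg, plane_inner, unitDir_zero, unitDir_one]
      have c0 : (p - x) 0 = ‖p - x‖ * cos φ := congrArg (fun v : Plane => v 0) hpφ
      have c1 : (p - x) 1 = ‖p - x‖ * sin φ := congrArg (fun v : Plane => v 1) hpφ
      rw [c0, c1]
      field_simp
    have h3 : 0 ≤ |cross (x + unitDir θ - x) (x + unitDir θ - p)| / ‖x - p‖ := by positivity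
    have h4 : cross 0 (x - p) = 0 := by simp [cross]
    rw [h2, show x - p + unitDir θ = x + unitDir θ - p by abel] at h1
    simp only [potential, h4, add_sub_cancel_left, norm_unitDir, sub_self, norm_zero,
      abs_zero, zero_div] at h3 ⊢
    linarith
  have hpc := (continuous_potential x p).comp (continuous_const.add continuous_unitDir :
    Continuous fun θ => x + unitDir θ)
  refine le_trans ?_ (setIntegral_mono (integrableOn_allowedAngles K x (by fun_prop))
    (integrableOn_allowedAngles K x (G := fun θ =>
      potential x p (x + unitDir θ) - potential x p x) (hpc.sub continuous_const)) hpt)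
  rw [allowedAngles, hG _ (by fun_prop) (fun θ => by simp), integral_trig, integral_trig]
  simp only [sin_two_pi, cos_two_pi, sin_zero, cos_zero]
  obtain ⟨M, hM⟩ : ∃ M, M = (φ₁ + φ₂) / 2 := ⟨_, rfl⟩
  obtain ⟨h, hh⟩ : ∃ h, h = (φ₂ - φ₁) / 2 := ⟨_, rfl⟩
  have e1 : φ₁ = M - h := by rw [hM, hh]; ring
  have e2 : φ₂ = M + h := by rw [hM, hh]; ring
  have hs : 0 ≤ sin h := sin_nonneg_of_nonneg_of_le_pi (by linarith) (by linarith)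
  have hc : 0 ≤ cos (φ - M) :=
    cos_nonneg_of_neg_pi_div_two_le_of_le (by linarith [hφ.1]) (by linarith [hφ.2])
  rw [cos_sub] at hc
  have := mul_nonneg hs hc
  rw [e1, e2] at h21 ⊢
  rw [sin_add, sin_sub, cos_add, cos_sub]
  have hpi := pi_gt_three
  nlinarith

theorem potential_comm (a p y : Plane) : potential a p y = potential p a y := by
  have : cross (y - a) (y - p) = -cross (y - p) (y - a) := by simp only [cross]; ring
  rw [potential, potential, norm_sub_rev a p, add_comm ‖y - a‖, this, abs_neg]

set_option maxHeartbeats 800000 in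
/-- A unit step from `x` avoiding the interior of `K` increases on average the potential of every
chord of `K` that cannot be improved by moving one of its endpoints to `x`. -/
theorem drift {K : Set Plane} (hK : Convex ℝ K) {x a p : Plane} (hx' : x ∉ interior K)
    (hx : x ∈ K) (ha : a ∈ K) (hp : p ∈ K) (hap : a ≠ p)
    (hl : ‖x - a‖ ≤ ‖a - p‖ + ‖x - p‖ / 2) (hm : ‖x - p‖ ≤ ‖a - p‖ + ‖x - a‖ / 2) :
    1 / 4 ≤ ∫ θ in allowedAngles K x, (potential a p (x + unitDir θ) - potential a p x) := by
  rcases Set.eq_empty_or_nonempty (interior K) with hint | hne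
  · exact drift_of_interior_eq_empty hK hint hx ha hp hap
  rcases eq_or_ne a x with rfl | hax
  · exact drift_of_eq_left hK hne hx' hx hp hap
  rcases eq_or_ne p x with rfl | hpx
  · simp only [potential_comm a p]
    exact drift_of_eq_left hK hne hx' hx ha hap.symm
  obtain ⟨φ₁, φ₂, h12, h21, harc, hG⟩ := exists_arc hK hx hx' hne
  obtain ⟨φ, hφ, haφ⟩ := harc a ha hax
  obtain ⟨ψ, hψ, hpψ⟩ := harc p hp hpx
  have hl0 : 0 < ‖a - x‖ := norm_pos_iff.mpr (sub_ne_zero.mpr hax)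
  have hm0 : 0 < ‖p - x‖ := norm_pos_iff.mpr (sub_ne_zero.mpr hpx)
  have hD0 : 0 < ‖a - p‖ := norm_pos_iff.mpr (sub_ne_zero.mpr hap)
  rw [norm_sub_rev x a, norm_sub_rev x p] at hl hm
  have c0 : (a - x) 0 = ‖a - x‖ * cos φ := congrArg (fun v : Plane => v 0) haφ
  have c1 : (a - x) 1 = ‖a - x‖ * sin φ := congrArg (fun v : Plane => v 1) haφ
  have c2 : (p - x) 0 = ‖p - x‖ * cos ψ := congrArg (fun v : Plane => v 0) hpψ
  have c3 : (p - x) 1 = ‖p - x‖ * sin ψ := congrArg (fun v : Plane => v 1) hpψ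
  have hDn := plane_norm_sq (a - p)
  have d0 : (a - p) 0 = ‖a - x‖ * cos φ - ‖p - x‖ * cos ψ := by
    rw [← c0, ← c2]; simp
  have d1 : (a - p) 1 = ‖a - x‖ * sin φ - ‖p - x‖ * sin ψ := by
    rw [← c1, ← c3]; simp
  have hcr : cross (x - a) (x - p) = ‖a - x‖ * ‖p - x‖ * sin (ψ - φ) := by
    have : cross (x - a) (x - p) = (a - x) 0 * (p - x) 1 - (a - x) 1 * (p - x) 0 := by
      simp only [cross, PiLp.sub_apply]; ring
    rw [this, c0, c1, c2, c3, sin_sub]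
    ring
  have hia : ∀ θ, inner ℝ (unitDir θ) (x - a) / ‖x - a‖ = -(cos φ * cos θ + sin φ * sin θ) := by
    intro θ
    rw [← neg_sub a x, inner_neg_right, norm_neg, plane_inner, unitDir_zero, unitDir_one, c0, c1]
    field_simp
  have hip : ∀ θ, inner ℝ (unitDir θ) (x - p) / ‖x - p‖ = -(cos ψ * cos θ + sin ψ * sin θ) := by
    intro θ
    rw [← neg_sub p x, inner_neg_right, norm_neg, plane_inner, unitDir_zero, unitDir_one, c2, c3]
    field_simp
  have hcu : ∀ θ, cross (unitDir θ) (a - p) =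
      cos θ * (‖a - x‖ * sin φ - ‖p - x‖ * sin ψ) -
        sin θ * (‖a - x‖ * cos φ - ‖p - x‖ * cos ψ) := by
    intro θ
    rw [cross, d0, d1, unitDir_zero, unitDir_one]
  rw [d0, d1] at hDn
  generalize ‖a - x‖ = l at *
  generalize ‖p - x‖ = m at *
  obtain ⟨M, hM⟩ : ∃ M, M = (φ₁ + φ₂) / 2 := ⟨_, rfl⟩
  obtain ⟨h, hh⟩ : ∃ h, h = (φ₂ - φ₁) / 2 := ⟨_, rfl⟩
  have e1 : φ₁ = M - h := by rw [hM, hh]; ring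
  have e2 : φ₂ = M + h := by rw [hM, hh]; ring
  have s1 := sin_sq_add_cos_sq φ
  have s2 := sin_sq_add_cos_sq ψ
  have s3 := sin_sq_add_cos_sq M
  have hcos : cos (φ - ψ) ≤ 7 / 8 := by
    have hD2 : ‖a - p‖ ^ 2 = l ^ 2 + m ^ 2 - 2 * (l * m * cos (φ - ψ)) := by
      rw [hDn, cos_sub]
      linear_combination l ^ 2 * s1 + m ^ 2 * s2
    by_contra! hc
    have hlm := mul_lt_mul_of_pos_left hc (mul_pos hl0 hm0)
    rcases le_total m l with h | h
    · have : (l - m / 2) ^ 2 ≤ ‖a - p‖ ^ 2 := pow_le_pow_left₀ (by linarith) (by linarith) 2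
      nlinarith
    · have : (m - l / 2) ^ 2 ≤ ‖a - p‖ ^ 2 := pow_le_pow_left₀ (by linarith) (by linarith) 2
      nlinarith
  obtain ⟨σ, hσ, hσ1, hσ2⟩ := exists_sign_half_le (l := l) (m := m) (D := ‖a - p‖) (cw := cos (φ - M))
    (sw := sin (φ - M)) (cz := cos (ψ - M)) (sz := sin (ψ - M)) hl0 hm0 hD0 hl hm
    (cos_sq_add_sin_sq _) (cos_sq_add_sin_sq _)
    (cos_nonneg_of_neg_pi_div_two_le_of_le (by linarith [hφ.1]) (by linarith [hφ.2]))
    (cos_nonneg_of_neg_pi_div_two_le_of_le (by linarith [hψ.1]) (by linarith [hψ.2]))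
    (by rw [← cos_sub]; convert hcos using 2; ring)
    (by
      rw [hDn, cos_sub, cos_sub, sin_sub, sin_sub]
      linear_combination -((l * cos φ - m * cos ψ) ^ 2 + (l * sin φ - m * sin ψ) ^ 2) * s3)
  have hsin : sin (ψ - φ) = cos (φ - M) * sin (ψ - M) - sin (φ - M) * cos (ψ - M) := by
    rw [show ψ - φ = (ψ - M) - (φ - M) by ring, sin_sub]
    ring
  have hσc : σ * cross (x - a) (x - p) = |cross (x - a) (x - p)| := by
    rw [hcr, abs_mul, abs_of_pos (mul_pos hl0 hm0), hsin, ← hσ1]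
    ring
  set A := -8 * cos φ - 8 * cos ψ + σ * (l * sin φ - m * sin ψ) / ‖a - p‖ with hA
  set B := -8 * sin φ - 8 * sin ψ - σ * (l * cos φ - m * cos ψ) / ‖a - p‖ with hB
  have hpt : ∀ θ, A * cos θ + B * sin θ + 0 ≤
      potential a p (x + unitDir θ) - potential a p x := by
    intro θ
    have h1 := le_potential_add a p x (unitDir θ) hσ hσc
    rw [hia, hip, hcu] at h1
    rw [le_sub_iff_add_le]
    refine le_trans (le_of_eq ?_) h1
    rw [hA, hB]
    ring
  have hpc := (continuous_potential a p).comp (continuous_const.add continuous_unitDir :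
    Continuous fun θ => x + unitDir θ)
  refine le_trans ?_ (setIntegral_mono (integrableOn_allowedAngles K x (by fun_prop))
    (integrableOn_allowedAngles K x (G := fun θ =>
      potential a p (x + unitDir θ) - potential a p x) (hpc.sub continuous_const)) hpt)
  rw [allowedAngles, hG _ (by fun_prop) (fun θ => by simp), integral_trig, integral_trig]
  have hh0 : 0 ≤ h := by linarith
  have hs0 : 0 ≤ sin h := sin_nonneg_of_nonneg_of_le_pi hh0 (by linarith)
  have hs : 1 / 4 ≤ sin h := by
    have h1 : cos (2 * h) ≤ cos |φ - ψ| := by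
      refine cos_le_cos_of_nonneg_of_le_pi (abs_nonneg _) (by linarith) ?_
      rw [abs_le]
      constructor <;> linarith [hφ.1, hφ.2, hψ.1, hψ.2]
    rw [cos_abs, cos_two_mul, cos_sq'] at h1
    by_contra! hlt
    have := mul_self_lt_mul_self hs0 hlt
    linarith
  have hfin : A * (sin (2 * π) - sin 0) - B * (cos (2 * π) - cos 0) + 0 * (2 * π - 0) -
      (A * (sin φ₂ - sin φ₁) - B * (cos φ₂ - cos φ₁) + 0 * (φ₂ - φ₁)) =
      2 * sin h * (8 * (cos (φ - M) + cos (ψ - M)) +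
        σ * (m * sin (ψ - M) - l * sin (φ - M)) / ‖a - p‖) := by
    simp only [sin_two_pi, cos_two_pi, sin_zero, cos_zero]
    rw [e1, e2, hA, hB, sin_add, sin_sub M h, cos_add, cos_sub M h, cos_sub, cos_sub, sin_sub,
      sin_sub]
    ring
  rw [hfin]
  have := mul_le_mul hs hσ2 (by norm_num) hs0
  linarith

/-- The exponent used in the exponential supermartingale. -/
noncomputable def rate : ℝ := 1 / 20000

/-- The largest potential at `y` of a chord between points of the family `h`. -/
noncomputable def maxPotential {n : ℕ} (h : Fin (n + 1) → Plane) (y : Plane) : ℝ :=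
  Finset.univ.sup' Finset.univ_nonempty
    fun q : Fin (n + 1) × Fin (n + 1) => potential (h q.1) (h q.2) y

theorem potential_le_maxPotential {n : ℕ} (h : Fin (n + 1) → Plane) (y : Plane)
    (i j : Fin (n + 1)) : potential (h i) (h j) y ≤ maxPotential h y :=
  Finset.le_sup' (fun q : Fin (n + 1) × Fin (n + 1) => potential (h q.1) (h q.2) y)
    (Finset.mem_univ (i, j))

theorem exists_maxPotential_eq {n : ℕ} (h : Fin (n + 1) → Plane) (y : Plane) :
    ∃ i j, maxPotential h y = potential (h i) (h j) y := by
  obtain ⟨q, -, hq⟩ := Finset.exists_mem_eq_sup' Finset.univ_nonempty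
    fun q : Fin (n + 1) × Fin (n + 1) => potential (h q.1) (h q.2) y
  exact ⟨q.1, q.2, hq⟩

theorem potential_nonneg (a p y : Plane) : 0 ≤ potential a p y := by
  unfold potential
  positivity

theorem maxPotential_nonneg {n : ℕ} (h : Fin (n + 1) → Plane) (y : Plane) :
    0 ≤ maxPotential h y :=
  (potential_nonneg _ _ _).trans (potential_le_maxPotential h y 0 0)

theorem continuous_maxPotential {n : ℕ} (h : Fin (n + 1) → Plane) :
    Continuous (maxPotential h) :=
  Continuous.finset_sup'_apply _ fun _ _ => continuous_potential _ _

theorem measurable_maxPotential (n : ℕ) :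
    Measurable fun q : (Fin (n + 1) → Plane) × Plane => maxPotential q.1 q.2 := by
  have : (fun q : (Fin (n + 1) → Plane) × Plane => maxPotential q.1 q.2) =
      Finset.univ.sup' Finset.univ_nonempty fun (r : Fin (n + 1) × Fin (n + 1))
        (q : (Fin (n + 1) → Plane) × Plane) => potential (q.1 r.1) (q.1 r.2) q.2 := by
    ext q
    rw [Finset.sup'_apply]
    rfl
  rw [this]
  refine Finset.measurable_sup' _ fun r _ => ?_
  have hc : Measurable fun q : (Fin (n + 1) → Plane) × Plane =>
      cross (q.2 - q.1 r.1) (q.2 - q.1 r.2) :=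
    continuous_cross.measurable.comp (f := fun q : (Fin (n + 1) → Plane) × Plane =>
      (q.2 - q.1 r.1, q.2 - q.1 r.2)) (by fun_prop)
  unfold potential
  fun_prop

theorem maxPotential_mono {n k : ℕ} (h : Fin (n + 1) → Plane) (h' : Fin (k + 1) → Plane)
    (hsub : Set.range h ⊆ Set.range h') (y : Plane) : maxPotential h y ≤ maxPotential h' y := by
  obtain ⟨i, j, hij⟩ := exists_maxPotential_eq h y
  obtain ⟨i', hi⟩ := hsub (Set.mem_range_self i)
  obtain ⟨j', hj⟩ := hsub (Set.mem_range_self j)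
  rw [hij, ← hi, ← hj]
  exact potential_le_maxPotential h' y i' j'

theorem potential_le (a p y : Plane) : potential a p y ≤ 18 * ‖a - p‖ + 8 * (‖y - a‖ + ‖y - p‖) +
    ‖y - a‖ := by
  unfold potential
  gcongr
  refine div_le_of_le_mul₀ (norm_nonneg _) (norm_nonneg _) ?_
  rw [cross_sub_eq]
  exact abs_cross_le _ _

theorem potential_le' (a p y : Plane) : potential a p y ≤ 18 * ‖a - p‖ + 8 * (‖y - a‖ + ‖y - p‖) +
    ‖y - p‖ := by
  rw [potential_comm, norm_sub_rev a p, add_comm ‖y - a‖]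
  exact potential_le p a y

theorem maxPotential_le {n : ℕ} (h : Fin (n + 1) → Plane) (y : Plane) {R : ℝ}
    (hR : ∀ i, ‖h i‖ ≤ R) (hy : ‖y‖ ≤ R) : maxPotential h y ≤ 70 * R := by
  obtain ⟨i, j, hij⟩ := exists_maxPotential_eq h y
  rw [hij]
  refine (potential_le _ _ _).trans ?_
  have h1 := norm_sub_le (h i) (h j)
  have h2 := norm_sub_le y (h i)
  have h3 := norm_sub_le y (h j)
  linarith [hR i, hR j]

theorem allowedAngles_eq_empty {K : Set Plane} {x : Plane} (hx : x ∈ interior K) :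
    allowedAngles K x = ∅ :=
  Set.eq_empty_of_forall_notMem fun _ hθ =>
    (Set.eq_empty_iff_forall_notMem.mp hθ.2 x) ⟨left_mem_segment ℝ _ _, hx⟩

theorem volume_allowedAngles_le (K : Set Plane) (x : Plane) :
    volume (allowedAngles K x) ≤ ENNReal.ofReal (2 * π) := by
  refine (measure_mono fun _ h => h.1).trans ?_
  rw [Real.volume_Ico, sub_zero]

theorem setIntegral_exp_potential_le {K : Set Plane} (hK : Convex ℝ K) {x a p : Plane}
    (hx' : x ∉ interior K) (hx : x ∈ K) (ha : a ∈ K) (hp : p ∈ K) (hap : a ≠ p)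
    (hl : ‖x - a‖ ≤ ‖a - p‖ + ‖x - p‖ / 2) (hm : ‖x - p‖ ≤ ‖a - p‖ + ‖x - a‖ / 2) :
    ∫ θ in allowedAngles K x, exp (-rate * potential a p (x + unitDir θ)) ≤
      volume.real (allowedAngles K x) * ((1 - rate / 50) * exp (-rate * potential a p x)) := by
  have hpc : Continuous fun θ => potential a p (x + unitDir θ) :=
    (continuous_potential a p).comp (continuous_const.add continuous_unitDir)
  have hd := drift hK hx' hx ha hp hap hl hm
  have hV0 : 0 ≤ volume.real (allowedAngles K x) := measureReal_nonneg
  have hV : volume.real (allowedAngles K x) ≤ 2 * π := by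
    have := ENNReal.toReal_mono ENNReal.ofReal_ne_top (volume_allowedAngles_le K x)
    rwa [ENNReal.toReal_ofReal two_pi_pos.le] at this
  have hpt : ∀ θ, exp (-rate * potential a p (x + unitDir θ)) ≤
      exp (-rate * potential a p x) * ((1 + 289 * rate ^ 2) -
        rate * (potential a p (x + unitDir θ) - potential a p x)) := by
    intro θ
    have h1 := potential_sub_le a p x (unitDir θ) (norm_unitDir θ)
    generalize potential a p (x + unitDir θ) = f at *
    generalize potential a p x = g at *
    rw [show -rate * f = -rate * g + -rate * (f - g) by ring, exp_add]
    refine mul_le_mul_of_nonneg_left ?_ (exp_nonneg _)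
    have h2 : |-rate * (f - g)| ≤ 1 := by
      rw [abs_mul, abs_neg, rate, abs_of_pos (by norm_num)]
      linarith
    have h3 := (abs_le.mp (Real.abs_exp_sub_one_sub_id_le h2)).2
    have h4 : (f - g) ^ 2 ≤ 17 ^ 2 := sq_le_sq' (abs_le.mp h1).1 (abs_le.mp h1).2
    have h5 : (-rate * (f - g)) ^ 2 ≤ 289 * rate ^ 2 := by
      rw [mul_pow, neg_sq]
      nlinarith [sq_nonneg rate]
    linarith
  refine (setIntegral_mono (integrableOn_allowedAngles K x (by fun_prop))
    (integrableOn_allowedAngles K x (by fun_prop)) hpt).trans ?_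
  rw [integral_const_mul, integral_sub
    (integrableOn_allowedAngles K x continuous_const)
    (integrableOn_allowedAngles K x (by fun_prop)), integral_const_mul, setIntegral_const,
    smul_eq_mul, mul_left_comm, mul_comm (exp _), ← mul_assoc]
  refine mul_le_mul_of_nonneg_right ?_ (exp_nonneg _)
  generalize volume.real (allowedAngles K x) = V at *
  have hpi := pi_lt_d2
  unfold rate
  linarith

theorem setIntegral_exp_maxPotential_le {n : ℕ} (h : Fin (n + 1) → Plane) (k : Fin (n + 1))
    (hne : ∃ i, h i ≠ h k) :
    ∫ θ in allowedAngles (convexHull ℝ (Set.range h)) (h k),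
        exp (-rate * maxPotential h (h k + unitDir θ)) ≤
      volume.real (allowedAngles (convexHull ℝ (Set.range h)) (h k)) *
        ((1 - rate / 50) * exp (-rate * maxPotential h (h k))) := by
  by_cases hint : h k ∈ interior (convexHull ℝ (Set.range h))
  · simp [allowedAngles_eq_empty hint]
  have hmem : ∀ i, h i ∈ convexHull ℝ (Set.range h) :=
    fun i => subset_convexHull ℝ _ (Set.mem_range_self i)
  obtain ⟨i, j, hij⟩ := exists_maxPotential_eq h (h k)
  have hl : ‖h k - h i‖ ≤ ‖h i - h j‖ + ‖h k - h j‖ / 2 := by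
    have h1 := potential_le_maxPotential h (h k) i k
    have h2 := potential_le' (h i) (h j) (h k)
    rw [hij] at h1
    have h3 : potential (h i) (h k) (h k) = 26 * ‖h k - h i‖ := by
      rw [potential, norm_sub_rev (h i)]
      simp [cross]
      ring
    rw [h3] at h1
    linarith
  have hm : ‖h k - h j‖ ≤ ‖h i - h j‖ + ‖h k - h i‖ / 2 := by
    have h1 := potential_le_maxPotential h (h k) k j
    have h2 := potential_le (h i) (h j) (h k)
    rw [hij] at h1
    have h3 : potential (h k) (h j) (h k) = 26 * ‖h k - h j‖ := by
      rw [potential]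
      simp [cross]
      ring
    rw [h3] at h1
    linarith
  have hap : h i ≠ h j := by
    intro he
    rw [he, sub_self, norm_zero] at hl
    have h0 : ‖h k - h j‖ = 0 := by linarith [norm_nonneg (h k - h j)]
    obtain ⟨q, hq⟩ := hne
    have h1 := potential_le_maxPotential h (h k) q k
    have h2 := potential_le (h i) (h j) (h k)
    rw [he, sub_self, h0, norm_zero] at h2
    rw [hij, he] at h1
    have h3 : potential (h q) (h k) (h k) = 26 * ‖h q - h k‖ := by
      rw [potential, norm_sub_rev (h k) (h q)]
      simp [cross]
      ring
    have h4 : 0 < ‖h q - h k‖ := norm_pos_iff.mpr (sub_ne_zero.mpr hq)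
    linarith
  have hc : Continuous fun θ => maxPotential h (h k + unitDir θ) :=
    (continuous_maxPotential h).comp (continuous_const.add continuous_unitDir)
  have hpc : Continuous fun θ => potential (h i) (h j) (h k + unitDir θ) :=
    (continuous_potential _ _).comp (continuous_const.add continuous_unitDir)
  rw [hij]
  refine (setIntegral_mono (integrableOn_allowedAngles _ _ (by fun_prop))
    (integrableOn_allowedAngles _ _ (G := fun θ =>
      exp (-rate * potential (h i) (h j) (h k + unitDir θ))) (by fun_prop)) fun θ => ?_).trans
    (setIntegral_exp_potential_le (convex_convexHull ℝ _) hint (hmem k) (hmem i) (hmem j) hap hl hm)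
  have := potential_le_maxPotential h (h k + unitDir θ) i j
  refine exp_le_exp.mpr ?_
  rw [neg_mul, neg_mul, neg_le_neg_iff]
  exact mul_le_mul_of_nonneg_left this (by norm_num [rate])

theorem exists_countable_isPiSystem (α : Type*) [m : MeasurableSpace α]
    [MeasurableSpace.CountablyGenerated α] :
    ∃ C : Set (Set α), C.Countable ∧ IsPiSystem C ∧ m = MeasurableSpace.generateFrom C := by
  obtain ⟨b, hb, hm⟩ := MeasurableSpace.CountablyGenerated.isCountablyGenerated (α := α)
  refine ⟨Set.sInter '' {t : Set (Set α) | t.Finite ∧ t ⊆ b},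
    (Set.countable_ofPred_finite_subset hb).image _, ?_, ?_⟩
  · rintro - ⟨s, hs, rfl⟩ - ⟨t, ht, rfl⟩ -
    exact ⟨s ∪ t, ⟨hs.1.union ht.1, Set.union_subset hs.2 ht.2⟩, Set.sInter_union s t⟩
  · refine le_antisymm ?_ (MeasurableSpace.generateFrom_le ?_)
    · rw [hm]
      refine MeasurableSpace.generateFrom_mono fun s hs => ?_
      exact ⟨{s}, ⟨Set.finite_singleton s, Set.singleton_subset_iff.mpr hs⟩, Set.sInter_singleton s⟩
    · rintro - ⟨s, hs, rfl⟩
      refine MeasurableSet.sInter hs.1.countable fun t ht => ?_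
      rw [hm]
      exact MeasurableSpace.measurableSet_generateFrom (hs.2 ht)

/-- A random finite measure giving the conditional probabilities of `Y` given `X` is the
conditional distribution of `Y` given `X`. -/
theorem ae_condDistrib_eq {Ω β E : Type*} [m0 : MeasurableSpace Ω] [mβ : MeasurableSpace β]
    [MeasurableSpace E] [StandardBorelSpace E] [Nonempty E] {μ : Measure Ω} [IsFiniteMeasure μ]
    {X : Ω → β} {Y : Ω → E} (hX : Measurable X) (hY : Measurable Y) (ν : Ω → Measure E)
    [∀ ω, IsFiniteMeasure (ν ω)]
    (h : ∀ s : Set E, MeasurableSet s →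
      μ[fun ω => s.indicator (fun _ => (1 : ℝ)) (Y ω) | mβ.comap X] =ᵐ[μ]
        fun ω => ∫ y, s.indicator (fun _ => (1 : ℝ)) y ∂ν ω) :
    ∀ᵐ ω ∂μ, ProbabilityTheory.condDistrib Y X μ (X ω) = ν ω := by
  obtain ⟨C, hC, hpi, hgen⟩ := exists_countable_isPiSystem E
  have key : ∀ s : Set E, MeasurableSet s →
      ∀ᵐ ω ∂μ, ProbabilityTheory.condDistrib Y X μ (X ω) s = ν ω s := by
    intro s hs
    have hind : StronglyMeasurable (s.indicator fun _ => (1 : ℝ)) :=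
      stronglyMeasurable_const.indicator hs
    have hint : Integrable (fun ω => s.indicator (fun _ => (1 : ℝ)) (Y ω)) μ := by
      refine Integrable.of_bound (hind.comp_measurable hY).aestronglyMeasurable 1
        (ae_of_all _ fun ω => ?_)
      by_cases hω : Y ω ∈ s <;> simp [hω]
    filter_upwards [h s hs,
      ProbabilityTheory.condExp_ae_eq_integral_condDistrib hX hY.aemeasurable hind hint]
      with ω h1 h2
    rw [h1, integral_indicator_const _ hs, integral_indicator_const _ hs, smul_eq_mul, mul_one,
      smul_eq_mul, mul_one] at h2
    exact ((measureReal_eq_measureReal_iff).mp h2).symm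
  have hCm : ∀ s ∈ C, MeasurableSet s := fun s hs => by
    rw [hgen]
    exact MeasurableSpace.measurableSet_generateFrom hs
  filter_upwards [(ae_ball_iff hC).mpr fun s hs => key s (hCm s hs), key _ MeasurableSet.univ]
    with ω h1 h2
  exact ext_of_generate_finite C hgen hpi h1 h2

section Rancher

variable {Ω : Type*} (x : ℕ → Ω → Plane)

/-- The first `n + 1` positions of the process. -/
def history (n : ℕ) (ω : Ω) (i : Fin (n + 1)) : Plane := x i ω

theorem rancherAngles_eq (n : ℕ) (ω : Ω) : rancherAngles x n ω =
    allowedAngles (convexHull ℝ (Set.range (history x n ω))) (history x n ω (Fin.last n)) :=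
  rfl

theorem continuous_step (n : ℕ) (ω : Ω) : Continuous fun θ => x n ω + unitDir θ :=
  continuous_const.add continuous_unitDir

instance (n : ℕ) (ω : Ω) : IsFiniteMeasure (rancherStep x n ω) where
  measure_univ_lt_top := by
    rw [rancherStep, Measure.smul_apply, Measure.map_apply (continuous_step x n ω).measurable
      MeasurableSet.univ, Set.preimage_univ, Measure.restrict_apply_univ, smul_eq_mul]
    exact (ENNReal.inv_mul_le_one _).trans_lt ENNReal.one_lt_top

theorem rancherStep_dist_ne (n : ℕ) (ω : Ω) : rancherStep x n ω {y | dist y (x n ω) ≠ 1} = 0 := by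
  have hs : MeasurableSet {y | dist y (x n ω) ≠ 1} :=
    (isOpen_ne_fun (by fun_prop) continuous_const).measurableSet
  rw [rancherStep, Measure.smul_apply, Measure.map_apply (continuous_step x n ω).measurable hs]
  have : (fun θ => x n ω + unitDir θ) ⁻¹' {y | dist y (x n ω) ≠ 1} = ∅ := by
    ext θ
    simp [dist_eq_norm, norm_unitDir]
  rw [this, measure_empty, smul_zero]

theorem integral_rancherStep_le (n : ℕ) (ω : Ω) (hne : ∃ i : Fin (n + 1), x i ω ≠ x n ω) :
    ∫ y, exp (-rate * maxPotential (history x n ω) y) ∂rancherStep x n ω ≤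
      (1 - rate / 50) * exp (-rate * maxPotential (history x n ω) (x n ω)) := by
  have h := setIntegral_exp_maxPotential_le (history x n ω) (Fin.last n) hne
  rw [← rancherAngles_eq] at h
  have hlast : history x n ω (Fin.last n) = x n ω := rfl
  rw [hlast] at h
  have hc : Continuous fun y => exp (-rate * maxPotential (history x n ω) y) := by
    have := continuous_maxPotential (history x n ω)
    fun_prop
  have h0 : 0 ≤ (1 - rate / 50) * exp (-rate * maxPotential (history x n ω) (x n ω)) :=
    mul_nonneg (by norm_num [rate]) (exp_nonneg _)
  rw [rancherStep, integral_smul_measure, integral_map (continuous_step x n ω).aemeasurable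
    hc.aestronglyMeasurable, smul_eq_mul, ENNReal.toReal_inv]
  refine (mul_le_mul_of_nonneg_left h (by positivity)).trans ?_
  rw [← mul_assoc]
  exact mul_le_of_le_one_left h0 inv_mul_le_one

end Rancher

section Walk

variable {Ω : Type*} {m0 : MeasurableSpace Ω} {μ : Measure Ω} [IsProbabilityMeasure μ]
  {ℱ : Filtration ℕ m0} {x : ℕ → Ω → Plane}

theorem measurable_history (hx : ∀ n, Measurable (x n)) (n : ℕ) : Measurable (history x n) :=
  measurable_pi_lambda _ fun i => hx i

theorem comap_history (n : ℕ) : MeasurableSpace.comap (history x n) inferInstance =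
    ⨆ i : Fin (n + 1), MeasurableSpace.comap (x i) (inferInstance : MeasurableSpace Plane) := by
  change MeasurableSpace.comap (history x n) (⨆ i : Fin (n + 1), _) = _
  rw [MeasurableSpace.comap_iSup]
  refine iSup_congr fun i => ?_
  rw [MeasurableSpace.comap_comp]
  rfl

theorem integral_next (hx : ∀ n, Measurable (x n))
    (hfilt : ∀ n, (ℱ n : MeasurableSpace Ω) =
      ⨆ i : Fin (n + 1), MeasurableSpace.comap (x i) (inferInstance : MeasurableSpace Plane))
    (hcond : ∀ (n : ℕ) (g : Plane → ℝ), Measurable g → (∀ y, |g y| ≤ 1) →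
      (μ[fun ω => g (x (n + 1) ω) | ℱ n] =ᵐ[μ] fun ω => ∫ y, g y ∂(rancherStep x n ω)))
    (n : ℕ) {F : (Fin (n + 1) → Plane) × Plane → ℝ} (hF : Measurable F) (hF1 : ∀ q, |F q| ≤ 1) :
    Integrable (fun ω => ∫ y, F (history x n ω, y) ∂rancherStep x n ω) μ ∧
    ∫ ω, F (history x n ω, x (n + 1) ω) ∂μ =
      ∫ ω, ∫ y, F (history x n ω, y) ∂rancherStep x n ω ∂μ := by
  have hX := measurable_history hx n
  have hae : ∀ᵐ ω ∂μ, ProbabilityTheory.condDistrib (x (n + 1)) (history x n) μ (history x n ω) =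
      rancherStep x n ω := by
    refine ae_condDistrib_eq hX (hx (n + 1)) (rancherStep x n) fun s hs => ?_
    have := hcond n (s.indicator fun _ => 1) (measurable_const.indicator hs) fun y => by
      by_cases hy : y ∈ s <;> simp [hy]
    rwa [hfilt n, ← comap_history] at this
  have hint : Integrable (fun ω => F (history x n ω, x (n + 1) ω)) μ :=
    Integrable.of_bound (hF.comp (hX.prodMk (hx (n + 1)))).aestronglyMeasurable 1
      (ae_of_all _ fun ω => hF1 _)
  have hce := ProbabilityTheory.condExp_prod_ae_eq_integral_condDistrib hX
    (hx (n + 1)).aemeasurable hF.stronglyMeasurable hint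
  have hce' : μ[fun ω => F (history x n ω, x (n + 1) ω) |
      MeasurableSpace.comap (history x n) inferInstance] =ᵐ[μ]
      fun ω => ∫ y, F (history x n ω, y) ∂rancherStep x n ω := by
    filter_upwards [hae, hce] with ω h1 h2
    rw [h2, h1]
  refine ⟨integrable_condExp.congr hce', ?_⟩
  rw [← integral_congr_ae hce', integral_condExp hX.comap_le]

end Walk

theorem le_limsup_div_of_eventually_exists {z : ℕ → ℝ} {c : ℝ} (hc : 0 < c) (hz : ∀ n, z n ≤ n)
    (h : ∀ᶠ n : ℕ in atTop, ∃ i ≤ n, c * n ≤ z i) : c ≤ atTop.limsup fun n => z n / n := by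
  refine le_limsup_of_frequently_le (frequently_atTop.mpr fun N => ?_)
    (isBoundedUnder_of ⟨1, fun n => div_le_one_of_le₀ (hz n) n.cast_nonneg⟩)
  have hlarge : ∀ᶠ n : ℕ in atTop, ((N + 1 : ℕ) : ℝ) ≤ c * n :=
    (tendsto_natCast_atTop_atTop.const_mul_atTop hc).eventually_ge_atTop _
  obtain ⟨n, ⟨i, hin, hi⟩, hn⟩ := (h.and hlarge).exists
  have hNi : N + 1 ≤ i := by exact_mod_cast hn.trans (hi.trans (hz i))
  refine ⟨i, (Nat.le_succ N).trans hNi, ?_⟩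
  rw [le_div_iff₀ (by exact_mod_cast (Nat.succ_pos N).trans_le hNi)]
  refine le_trans ?_ hi
  gcongr

theorem measurable_maxPotential_history {Ω : Type*} {m0 : MeasurableSpace Ω} {x : ℕ → Ω → Plane}
    (hx : ∀ n, Measurable (x n)) (n k : ℕ) :
    Measurable fun ω => maxPotential (history x n ω) (x k ω) := by
  have h := (measurable_history hx n).prodMk (hx k)
  have hcomp := (measurable_maxPotential n).comp h
  exact hcomp

section Walk

variable {Ω : Type*} {m0 : MeasurableSpace Ω} {μ : Measure Ω} [IsProbabilityMeasure μ]
  {ℱ : Filtration ℕ m0} {x : ℕ → Ω → Plane}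

theorem ae_dist_succ_eq_one (hx : ∀ n, Measurable (x n))
    (hfilt : ∀ n, (ℱ n : MeasurableSpace Ω) =
      ⨆ i : Fin (n + 1), MeasurableSpace.comap (x i) (inferInstance : MeasurableSpace Plane))
    (hcond : ∀ (n : ℕ) (g : Plane → ℝ), Measurable g → (∀ y, |g y| ≤ 1) →
      (μ[fun ω => g (x (n + 1) ω) | ℱ n] =ᵐ[μ] fun ω => ∫ y, g y ∂(rancherStep x n ω)))
    (n : ℕ) : ∀ᵐ ω ∂μ, dist (x (n + 1) ω) (x n ω) = 1 := by
  have hs : MeasurableSet {q : (Fin (n + 1) → Plane) × Plane | dist q.2 (q.1 (Fin.last n)) ≠ 1} :=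
    (isOpen_ne_fun (by fun_prop) continuous_const).measurableSet
  set s := {q : (Fin (n + 1) → Plane) × Plane | dist q.2 (q.1 (Fin.last n)) ≠ 1}
  have h := (integral_next hx hfilt hcond n (F := s.indicator fun _ => 1)
    (measurable_const.indicator hs) fun q => by by_cases hq : q ∈ s <;> simp [hq]).2
  have h0 : ∀ ω, ∫ y, s.indicator (fun _ => (1 : ℝ)) (history x n ω, y) ∂rancherStep x n ω = 0 := by
    intro ω
    refine integral_eq_zero_of_ae ?_
    have := rancherStep_dist_ne x n ω
    filter_upwards [measure_eq_zero_iff_ae_notMem.mp this] with y hy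
    exact Set.indicator_of_notMem hy _
  simp only [h0, integral_zero] at h
  have hm : MeasurableSet ((fun ω => (history x n ω, x (n + 1) ω)) ⁻¹' s) :=
    ((measurable_history hx n).prodMk (hx (n + 1))) hs
  have h1 : ∫ ω, ((fun ω => (history x n ω, x (n + 1) ω)) ⁻¹' s).indicator (fun _ => (1 : ℝ)) ω ∂μ =
    0 := h
  rw [integral_indicator_const _ hm, smul_eq_mul, mul_one, measureReal_eq_zero_iff] at h1
  filter_upwards [measure_eq_zero_iff_ae_notMem.mp h1] with ω hω
  by_contra hne
  exact hω hne

theorem abs_exp_neg_rate_maxPotential_le {n : ℕ} (h : Fin (n + 1) → Plane) (y : Plane) :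
    |exp (-rate * maxPotential h y)| ≤ 1 := by
  rw [abs_exp, exp_le_one_iff, neg_mul, neg_nonpos]
  exact mul_nonneg (by norm_num [rate]) (maxPotential_nonneg h y)

theorem integrable_exp_maxPotential (hx : ∀ n, Measurable (x n)) (n k : ℕ) :
    Integrable (fun ω => exp (-rate * maxPotential (history x n ω) (x k ω))) μ :=
  Integrable.of_bound ((measurable_maxPotential_history hx n k).const_mul _).exp.aestronglyMeasurable
    1 (ae_of_all _ fun _ => abs_exp_neg_rate_maxPotential_le _ _)

theorem integral_exp_maxPotential_succ_le (hx : ∀ n, Measurable (x n))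
    (hfilt : ∀ n, (ℱ n : MeasurableSpace Ω) =
      ⨆ i : Fin (n + 1), MeasurableSpace.comap (x i) (inferInstance : MeasurableSpace Plane))
    (hcond : ∀ (n : ℕ) (g : Plane → ℝ), Measurable g → (∀ y, |g y| ≤ 1) →
      (μ[fun ω => g (x (n + 1) ω) | ℱ n] =ᵐ[μ] fun ω => ∫ y, g y ∂(rancherStep x n ω)))
    (n : ℕ) (hn : n ≠ 0) :
    ∫ ω, exp (-rate * maxPotential (history x (n + 1) ω) (x (n + 1) ω)) ∂μ ≤
      (1 - rate / 50) * ∫ ω, exp (-rate * maxPotential (history x n ω) (x n ω)) ∂μ := by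
  have hstep := integral_next hx hfilt hcond n
    (F := fun q => exp (-rate * maxPotential q.1 q.2))
    ((measurable_maxPotential n).const_mul _).exp
    fun q => abs_exp_neg_rate_maxPotential_le q.1 q.2
  refine (integral_mono (integrable_exp_maxPotential hx (n + 1) (n + 1))
    (integrable_exp_maxPotential hx n (n + 1)) fun ω => ?_).trans ?_
  · refine exp_le_exp.mpr ?_
    rw [neg_mul, neg_mul, neg_le_neg_iff]
    refine mul_le_mul_of_nonneg_left (maxPotential_mono _ _ ?_ _) (by norm_num [rate])
    rintro - ⟨i, rfl⟩
    exact ⟨i.castSucc, rfl⟩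
  · rw [hstep.2, ← integral_const_mul]
    refine integral_mono_ae hstep.1 ((integrable_exp_maxPotential hx n n).const_mul _) ?_
    filter_upwards [ae_dist_succ_eq_one hx hfilt hcond 0] with ω hω
    refine integral_rancherStep_le x n ω ?_
    by_contra! hall
    have h0 := hall ⟨0, by omega⟩
    have h1 := hall ⟨1, by omega⟩
    simp only at h0 h1
    rw [zero_add, h0, h1, dist_self] at hω
    exact zero_ne_one hω

theorem integral_exp_maxPotential_le (hx : ∀ n, Measurable (x n))
    (hfilt : ∀ n, (ℱ n : MeasurableSpace Ω) =
      ⨆ i : Fin (n + 1), MeasurableSpace.comap (x i) (inferInstance : MeasurableSpace Plane))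
    (hcond : ∀ (n : ℕ) (g : Plane → ℝ), Measurable g → (∀ y, |g y| ≤ 1) →
      (μ[fun ω => g (x (n + 1) ω) | ℱ n] =ᵐ[μ] fun ω => ∫ y, g y ∂(rancherStep x n ω)))
    (n : ℕ) :
    ∫ ω, exp (-rate * maxPotential (history x (n + 1) ω) (x (n + 1) ω)) ∂μ ≤
      exp (-rate / 50 * n) := by
  induction n with
  | zero =>
    refine (integral_mono (integrable_exp_maxPotential hx 1 1) (integrable_const 1) fun ω =>
      (le_abs_self _).trans (abs_exp_neg_rate_maxPotential_le _ _)).trans ?_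
    simp
  | succ n ih =>
    refine (integral_exp_maxPotential_succ_le hx hfilt hcond (n + 1) n.succ_ne_zero).trans ?_
    have h1 : 1 - rate / 50 ≤ exp (-rate / 50) := by linarith [add_one_le_exp (-rate / 50)]
    rw [Nat.cast_add_one, mul_add_one, exp_add, mul_comm (exp _)]
    exact mul_le_mul h1 ih (integral_nonneg fun _ => exp_nonneg _) (exp_nonneg _)

theorem ae_eventually_lt_maxPotential (hx : ∀ n, Measurable (x n))
    (hfilt : ∀ n, (ℱ n : MeasurableSpace Ω) =
      ⨆ i : Fin (n + 1), MeasurableSpace.comap (x i) (inferInstance : MeasurableSpace Plane))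
    (hcond : ∀ (n : ℕ) (g : Plane → ℝ), Measurable g → (∀ y, |g y| ≤ 1) →
      (μ[fun ω => g (x (n + 1) ω) | ℱ n] =ᵐ[μ] fun ω => ∫ y, g y ∂(rancherStep x n ω))) :
    ∀ᵐ ω ∂μ, ∀ᶠ n : ℕ in atTop,
      ((n + 1 : ℕ) : ℝ) / 100 < maxPotential (history x (n + 1) ω) (x (n + 1) ω) := by
  have hbound : ∀ n : ℕ,
      μ {ω | maxPotential (history x (n + 1) ω) (x (n + 1) ω) ≤ ((n + 1 : ℕ) : ℝ) / 100} ≤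
        ENNReal.ofReal (exp (rate / 100) * exp (-rate / 100) ^ n) := by
    intro n
    have hmarkov := mul_meas_ge_le_integral_of_nonneg (μ := μ)
      (ae_of_all _ fun ω => exp_nonneg
        (-rate * maxPotential (history x (n + 1) ω) (x (n + 1) ω)))
      (integrable_exp_maxPotential hx (n + 1) (n + 1))
      (exp (-rate * (((n + 1 : ℕ) : ℝ) / 100)))
    have hset : {ω | exp (-rate * (((n + 1 : ℕ) : ℝ) / 100)) ≤
        exp (-rate * maxPotential (history x (n + 1) ω) (x (n + 1) ω))} =
        {ω | maxPotential (history x (n + 1) ω) (x (n + 1) ω) ≤ ((n + 1 : ℕ) : ℝ) / 100} := by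
      ext ω
      simp only [Set.mem_ofPred_eq]
      rw [exp_le_exp, neg_mul, neg_mul, neg_le_neg_iff, mul_le_mul_iff_right₀ (by norm_num [rate])]
    rw [hset] at hmarkov
    have h2 := hmarkov.trans (integral_exp_maxPotential_le hx hfilt hcond n)
    rw [← ofReal_measureReal]
    refine ENNReal.ofReal_le_ofReal ?_
    rw [mul_comm, ← le_div_iff₀ (exp_pos _), ← exp_sub] at h2
    refine h2.trans (le_of_eq ?_)
    rw [← exp_nat_mul, ← exp_add]
    congr 1
    push_cast
    ring
  have hsum : Summable fun n : ℕ => exp (rate / 100) * exp (-rate / 100) ^ n :=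
    (summable_geometric_of_lt_one (exp_nonneg _)
      (exp_lt_one_iff.mpr (by norm_num [rate]))).mul_left _
  have := ae_eventually_notMem (ne_top_of_le_ne_top hsum.tsum_ofReal_ne_top
    (ENNReal.tsum_le_tsum hbound))
  filter_upwards [this] with ω hω
  filter_upwards [hω] with n hn
  exact not_le.mp hn

end Walk

/-- Theorem 1: the planar rancher escapes at a positive limsup speed:
there is `s > 0` with `limsup ‖xₙ‖ / n ≥ s` almost surely.

The rancher process is described by: a filtration `ℱ` with `ℱ n` generated by
`x₀, …, xₙ`; the starting point `x₀ = 0`; and the requirement that the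
conditional law of `x_{n+1}` given `ℱ n` is the uniform measure on the allowed
arcs, expressed by the condition that for every bounded measurable test
function `g`, the conditional expectation of `g (x_{n+1})` given `ℱ n` is
a.s. the integral of `g` against `rancherStep x n ω`. -/
theorem rancher_positive_limsup_speed {Ω : Type*} {m0 : MeasurableSpace Ω}
    {μ : Measure Ω} [IsProbabilityMeasure μ] (ℱ : Filtration ℕ m0)
    (x : ℕ → Ω → EuclideanSpace ℝ (Fin 2))
    (hx : ∀ n, Measurable (x n))
    (hfilt : ∀ n, (ℱ n : MeasurableSpace Ω) =
      ⨆ i : Fin (n + 1), MeasurableSpace.comap (x i)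
        (inferInstance : MeasurableSpace (EuclideanSpace ℝ (Fin 2))))
    (hx0 : ∀ ω, x 0 ω = 0)
    (hcond : ∀ (n : ℕ) (g : EuclideanSpace ℝ (Fin 2) → ℝ), Measurable g →
      (∀ y, |g y| ≤ 1) →
      (μ[fun ω => g (x (n + 1) ω) | ℱ n] =ᵐ[μ]
        fun ω => ∫ y, g y ∂(rancherStep x n ω))) :
    ∃ s : ℝ, 0 < s ∧
      ∀ᵐ ω ∂μ, s ≤ atTop.limsup fun n => ‖x n ω‖ / n := by
  refine ⟨1 / 7000, by norm_num, ?_⟩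
  filter_upwards [ae_eventually_lt_maxPotential hx hfilt hcond,
    ae_all_iff.mpr (ae_dist_succ_eq_one hx hfilt hcond)] with ω hω hstep
  refine le_limsup_div_of_eventually_exists (by norm_num) (fun n => ?_) ?_
  · induction n with
    | zero => simp [hx0]
    | succ n ih =>
      have := norm_le_norm_add_norm_sub' (x (n + 1) ω) (x n ω)
      rw [← dist_eq_norm, hstep n] at this
      push_cast
      linarith
  · obtain ⟨N, hN⟩ := eventually_atTop.mp hω
    refine eventually_atTop.mpr ⟨N + 1, fun k hk => ?_⟩
    obtain ⟨n, rfl⟩ : ∃ n, k = n + 1 := Nat.exists_eq_add_of_le' ((Nat.le_add_left 1 N).trans hk)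
    have hn := hN n (Nat.le_of_succ_le_succ hk)
    by_contra! hsmall
    have := maxPotential_le (history x (n + 1) ω) (x (n + 1) ω)
      (fun i => (hsmall i (Nat.lt_succ_iff.mp i.2)).le) (hsmall (n + 1) le_rfl).le
    linarith
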